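/- Let K be a field of characteristic zero, n a positive integer, and G a finite subgroup of GL_n(K), where for g ∈ G we write A(g) for its matrix. Let E = Λ(x_1, …, x_n, y_1, …, y_n) be the exterior algebra over K on 2n generators. For each g ∈ G let J'_g be the two-sided ideal of E generated by the n degree-one elements y_i − Σ_{j=1}^n A(g)_{i,j} x_j (for i = 1, …, n), and set I_G = ⋂_{g ∈ G} J'_g. Let G act on the subalgebra Λ(x_1, …, x_n) ⊆ E by the degree-preserving algebra automorphisms determined by g · x_i = Σ_{j=1}^n A(g)_{i,j} x_j, and let J_G ⊆ Λ(x_1, …, x_n) be the Hilbert ideal, i.e., the ideal of Λ(x_1, …, x_n) generated by all G-invariant elements of positive degree. Then (I_G + (y_1, …, y_n)) ∩ Λ(x_1, …, x_n) = J_G, where (y_1, …, y_n) denotes the two-sided ideal of E generated by y_1, …, y_n and Λ(x_1, …, x_n) is the subalgebra of E generated by x_1, …, x_n. -/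

import Mathlib

open scoped DirectSum

/-- The exterior algebra `E = Λ(x_1, …, x_n, y_1, …, y_n)`, realized as the
exterior algebra on `(Fin n → K) × (Fin n → K)`. -/
noncomputable abbrev ExtXY (K : Type*) [Field K] (n : ℕ) :=
  ExteriorAlgebra K ((Fin n → K) × (Fin n → K))

/-- The generator `x_i` of `E`. -/
noncomputable def xVar (K : Type*) [Field K] (n : ℕ) (i : Fin n) : ExtXY K n :=
  ExteriorAlgebra.ι K (Pi.single i 1, 0)

/-- The generator `y_i` of `E`. -/
noncomputable def yVar (K : Type*) [Field K] (n : ℕ) (i : Fin n) : ExtXY K n :=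
  ExteriorAlgebra.ι K (0, Pi.single i 1)

/-- The action of `g ∈ GL_n(K)` on `Λ(x_1, …, x_n)` determined by
`g · x_i = Σ_j A(g)_{i,j} x_j`. -/
noncomputable def xAct (K : Type*) [Field K] (n : ℕ)
    (g : Matrix.GeneralLinearGroup (Fin n) K) :
    ExteriorAlgebra K (Fin n → K) →ₐ[K] ExteriorAlgebra K (Fin n → K) :=
  ExteriorAlgebra.map (Matrix.toLin' ((g : Matrix (Fin n) (Fin n) K).transpose))

/-- The embedding of `Λ(x_1, …, x_n)` as the subalgebra of `E` generated by
`x_1, …, x_n`. -/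
noncomputable def xEmbed (K : Type*) [Field K] (n : ℕ) :
    ExteriorAlgebra K (Fin n → K) →ₐ[K] ExtXY K n :=
  ExteriorAlgebra.map (LinearMap.inl K (Fin n → K) (Fin n → K))

namespace DerksenExt

variable {K : Type*} [Field K] {n : ℕ}

/-- embedding of the y-part -/
noncomputable def yE (K : Type*) [Field K] (n : ℕ) :
    ExteriorAlgebra K (Fin n → K) →ₐ[K] ExtXY K n :=
  ExteriorAlgebra.map (LinearMap.inr K (Fin n → K) (Fin n → K))

/-- substitution `x ↦ x`, `y ↦ T y` -/
noncomputable def phi (T : (Fin n → K) →ₗ[K] (Fin n → K)) :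
    ExtXY K n →ₐ[K] ExteriorAlgebra K (Fin n → K) :=
  ExteriorAlgebra.map (LinearMap.coprod LinearMap.id T)

lemma phi_x (T : (Fin n → K) →ₗ[K] (Fin n → K)) (p) : phi T (xEmbed K n p) = p := by
  have : (phi T).comp (xEmbed K n) = AlgHom.id K _ := by
    apply ExteriorAlgebra.hom_ext
    ext; simp [phi, xEmbed]
  exact DFunLike.congr_fun this p

lemma phi_y (T : (Fin n → K) →ₗ[K] (Fin n → K)) (p) :
    phi T (yE K n p) = ExteriorAlgebra.map T p := by
  have : (phi T).comp (yE K n) = ExteriorAlgebra.map T := by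
    apply ExteriorAlgebra.hom_ext
    ext; simp [phi, yE]
  exact DFunLike.congr_fun this p

lemma map_zero_eq (p : ExteriorAlgebra K (Fin n → K)) :
    ExteriorAlgebra.map (0 : (Fin n → K) →ₗ[K] (Fin n → K)) p
      = algebraMap K _ (ExteriorAlgebra.algebraMapInv p) := by
  have : ExteriorAlgebra.map (0 : (Fin n → K) →ₗ[K] (Fin n → K)) =
      (Algebra.ofId K _).comp ExteriorAlgebra.algebraMapInv := by
    apply ExteriorAlgebra.hom_ext
    ext; simp [ExteriorAlgebra.algebraMapInv]
  exact DFunLike.congr_fun this p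

lemma inv_map (T : (Fin n → K) →ₗ[K] (Fin n → K)) (p : ExteriorAlgebra K (Fin n → K)) :
    ExteriorAlgebra.algebraMapInv (ExteriorAlgebra.map T p)
      = ExteriorAlgebra.algebraMapInv p := by
  have : (ExteriorAlgebra.algebraMapInv (R := K)).comp (ExteriorAlgebra.map T) =
      ExteriorAlgebra.algebraMapInv := by
    apply ExteriorAlgebra.hom_ext
    ext; simp [ExteriorAlgebra.algebraMapInv]
  exact DFunLike.congr_fun this p

lemma comm_y (w : Fin n → K) (p : ExteriorAlgebra K (Fin n → K)) :
    ∃ p', ExteriorAlgebra.ι K ((0, w) : (Fin n → K) × (Fin n → K)) * xEmbed K n p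
      = xEmbed K n p' * ExteriorAlgebra.ι K (0, w) := by
  induction p using ExteriorAlgebra.induction with
  | algebraMap r => exact ⟨algebraMap K _ r, by simp [Algebra.commutes]⟩
  | ι v =>
    refine ⟨-ExteriorAlgebra.ι K v, ?_⟩
    have := ExteriorAlgebra.ι_add_mul_swap (R := K) ((0, w) : (Fin n → K) × (Fin n → K)) (v, 0)
    simp only [xEmbed, map_neg, ExteriorAlgebra.map_apply_ι, LinearMap.inl_apply, neg_mul]
    exact eq_neg_of_add_eq_zero_left this
  | mul a b ha hb =>
    obtain ⟨a', ha⟩ := ha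
    obtain ⟨b', hb⟩ := hb
    exact ⟨a' * b', by rw [map_mul, map_mul, ← mul_assoc, ha, mul_assoc, hb, mul_assoc]⟩
  | add a b ha hb =>
    obtain ⟨a', ha⟩ := ha
    obtain ⟨b', hb⟩ := hb
    exact ⟨a' + b', by rw [map_add, map_add, mul_add, ha, hb, add_mul]⟩

lemma mem_span (h : ExtXY K n) :
    h ∈ Submodule.span K {e | ∃ p q, e = xEmbed K n p * yE K n q} := by
  set S := Submodule.span K {e | ∃ p q, e = xEmbed K n p * yE K n q} with hS
  have key : ∀ a : ExtXY K n, ∀ s ∈ S, a * s ∈ S := by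
    intro a
    induction a using ExteriorAlgebra.induction with
    | algebraMap r =>
      intro s hs
      rw [← Algebra.smul_def]; exact S.smul_mem _ hs
    | ι v =>
      intro s hs
      induction hs using Submodule.span_induction with
      | mem s hs =>
        obtain ⟨p, q, rfl⟩ := hs
        have : ExteriorAlgebra.ι K v = xEmbed K n (ExteriorAlgebra.ι K v.1)
            + ExteriorAlgebra.ι K (0, v.2) := by
          simp [xEmbed, ← map_add]
        rw [this, add_mul]
        refine S.add_mem (Submodule.subset_span ⟨_ * p, q, by rw [map_mul, mul_assoc]⟩) ?_
        obtain ⟨p', hp⟩ := comm_y v.2 p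
        refine Submodule.subset_span ⟨p', ExteriorAlgebra.ι K v.2 * q, ?_⟩
        rw [← mul_assoc, hp, map_mul, mul_assoc]
        simp [yE]
      | zero => simp
      | add a b _ _ ha hb => rw [mul_add]; exact S.add_mem ha hb
      | smul c a _ ha => rw [mul_smul_comm]; exact S.smul_mem _ ha
    | mul a b ha hb => intro s hs; rw [mul_assoc]; exact ha _ (hb _ hs)
    | add a b ha hb => intro s hs; rw [add_mul]; exact S.add_mem (ha _ hs) (hb _ hs)
  have := key h 1 (Submodule.subset_span ⟨1, 1, by simp⟩)
  simpa using this

/-- positive-degree part -/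
noncomputable abbrev Pos (K : Type*) [Field K] (n : ℕ) :
    Submodule K (ExteriorAlgebra K (Fin n → K)) :=
  ⨆ d ∈ Set.Ioi (0 : ℕ), ⋀[K]^d (Fin n → K)

lemma pos_ind {Q : ExteriorAlgebra K (Fin n → K) → Prop} (h0 : Q 0)
    (hadd : ∀ a b, Q a → Q b → Q (a + b))
    (hm : ∀ v b, Q (ExteriorAlgebra.ι K v * b)) {d : ℕ} (hd : 0 < d)
    {q} (hq : q ∈ ⋀[K]^d (Fin n → K)) : Q q := by
  obtain ⟨d, rfl⟩ := Nat.exists_eq_succ_of_ne_zero hd.ne'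
  rw [ExteriorAlgebra.exteriorPower, Nat.succ_eq_add_one, pow_succ'] at hq
  induction hq using Submodule.mul_induction_on' with
  | mem_mul_mem a ha b hb => obtain ⟨v, rfl⟩ := ha; exact hm v b
  | add a _ b _ ha hb => exact hadd a b ha hb

lemma sub_mem_pos (q : ExteriorAlgebra K (Fin n → K)) :
    q - algebraMap K _ (ExteriorAlgebra.algebraMapInv q) ∈ Pos K n := by
  have ht : q ∈ ⨆ d : ℕ, ⋀[K]^d (Fin n → K) := by
    rw [(DirectSum.Decomposition.isInternal
      (fun d : ℕ => ⋀[K]^d (Fin n → K))).submodule_iSup_eq_top]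
    trivial
  induction ht using Submodule.iSup_induction' with
  | mem d q hq =>
    rcases Nat.eq_zero_or_pos d with rfl | hd
    · rw [ExteriorAlgebra.exteriorPower, pow_zero] at hq
      obtain ⟨c, rfl⟩ := Submodule.mem_one.1 hq
      simp
    · have : ExteriorAlgebra.algebraMapInv q = 0 := by
        refine pos_ind (Q := fun q => ExteriorAlgebra.algebraMapInv q = 0) (by simp) ?_ ?_ hd hq
        · intro a b ha hb; simp [ha, hb]
        · intro v b; simp [ExteriorAlgebra.algebraMapInv]
      rw [this, map_zero, sub_zero]
      exact Submodule.mem_iSup_of_mem d (Submodule.mem_iSup_of_mem hd hq)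
  | zero => simp
  | add a b _ _ ha hb =>
    have := Submodule.add_mem _ ha hb
    convert this using 1
    simp; abel

lemma y_of_vec (w : Fin n → K) :
    (ExteriorAlgebra.ι K ((0, w) : (Fin n → K) × (Fin n → K))) = ∑ i, w i • yVar K n i := by
  simp only [yVar, ← map_smul, ← map_sum]
  congr 1
  ext j
  · simp [Prod.fst_sum]
  · simp [Prod.snd_sum, Finset.sum_apply, Pi.single_apply]

lemma x_of_vec (w : Fin n → K) :
    (ExteriorAlgebra.ι K ((w, 0) : (Fin n → K) × (Fin n → K))) = ∑ i, w i • xVar K n i := by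
  simp only [xVar, ← map_smul, ← map_sum]
  congr 1
  ext j
  · simp [Prod.fst_sum, Finset.sum_apply, Pi.single_apply]
  · simp [Prod.snd_sum]

lemma smul_mem' {A : Type*} [Ring A] [Algebra K A] (I : TwoSidedIdeal A) (c : K) {a : A}
    (ha : a ∈ I) : c • a ∈ I := by
  rw [Algebra.smul_def]; exact I.mul_mem_left _ _ ha

lemma yE_mem {q : ExteriorAlgebra K (Fin n → K)} (hq : q ∈ Pos K n) :
    yE K n q ∈ TwoSidedIdeal.span (Set.range (yVar K n)) := by
  set I := TwoSidedIdeal.span (Set.range (yVar K n)) with hI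
  induction hq using Submodule.iSup_induction' with
  | mem d q hq =>
    induction hq using Submodule.iSup_induction' with
    | mem hd q hq =>
      refine pos_ind (Q := fun q => yE K n q ∈ I) (by simp [I.zero_mem]) ?_ ?_ hd hq
      · intro a b ha hb; rw [map_add]; exact I.add_mem ha hb
      · intro v b
        rw [map_mul]
        refine I.mul_mem_right _ _ ?_
        simp only [yE, ExteriorAlgebra.map_apply_ι, LinearMap.inr_apply]
        rw [y_of_vec]
        refine sum_mem fun i _ => smul_mem' I _ (TwoSidedIdeal.subset_span ⟨i, rfl⟩)
    | zero => simp [I.zero_mem]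
    | add a b _ _ ha hb => rw [map_add]; exact I.add_mem ha hb
  | zero => simp [I.zero_mem]
  | add a b _ _ ha hb => rw [map_add]; exact I.add_mem ha hb

lemma diff_mem (g : Matrix.GeneralLinearGroup (Fin n) K) (q : ExteriorAlgebra K (Fin n → K)) :
    yE K n q - xEmbed K n (xAct K n g q) ∈ TwoSidedIdeal.span
              {e' : ExtXY K n | ∃ i : Fin n,
                e' = yVar K n i - ∑ j : Fin n,
                  ((g : Matrix (Fin n) (Fin n) K) i j) • xVar K n j} := by
  set I := TwoSidedIdeal.span
              {e' : ExtXY K n | ∃ i : Fin n,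
                e' = yVar K n i - ∑ j : Fin n,
                  ((g : Matrix (Fin n) (Fin n) K) i j) • xVar K n j} with hI
  induction q using ExteriorAlgebra.induction with
  | algebraMap r => simp [I.zero_mem]
  | ι v =>
    have : yE K n (ExteriorAlgebra.ι K v) - xEmbed K n (xAct K n g (ExteriorAlgebra.ι K v))
      = ∑ i, v i • (yVar K n i - ∑ j : Fin n,
                  ((g : Matrix (Fin n) (Fin n) K) i j) • xVar K n j) := by
      simp only [yE, xEmbed, xAct, ExteriorAlgebra.map_apply_ι, LinearMap.inr_apply,
        LinearMap.inl_apply, y_of_vec, x_of_vec, smul_sub, Finset.sum_sub_distrib]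
      congr 1
      simp only [Finset.smul_sum, smul_smul]
      rw [Finset.sum_comm]
      refine Finset.sum_congr rfl fun j _ => ?_
      rw [← Finset.sum_smul]
      congr 1
      simp [Matrix.mulVec, dotProduct, mul_comm]
    rw [this]
    exact sum_mem fun i _ => smul_mem' I _ (TwoSidedIdeal.subset_span ⟨i, rfl⟩)
  | mul a b ha hb =>
    have := I.add_mem (I.mul_mem_right _ (yE K n b) ha)
      (I.mul_mem_left (xEmbed K n (xAct K n g a)) _ hb)
    convert this using 1
    simp only [map_mul]; noncomm_ring
  | add a b ha hb =>
    have := I.add_mem ha hb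
    convert this using 1
    simp only [map_add]; abel

lemma phi_kills (g : Matrix.GeneralLinearGroup (Fin n) K) {h : ExtXY K n}
    (hh : h ∈ TwoSidedIdeal.span
              {e' : ExtXY K n | ∃ i : Fin n,
                e' = yVar K n i - ∑ j : Fin n,
                  ((g : Matrix (Fin n) (Fin n) K) i j) • xVar K n j}) :
    phi (Matrix.toLin' ((g : Matrix (Fin n) (Fin n) K).transpose)) h = 0 := by
  rw [← TwoSidedIdeal.mem_ker]
  refine TwoSidedIdeal.span_le.2 ?_ hh
  rintro _ ⟨i, rfl⟩
  rw [SetLike.mem_coe, TwoSidedIdeal.mem_ker, ← x_of_vec]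
  simp only [phi, yVar, map_sub, ExteriorAlgebra.map_apply_ι]
  rw [← map_sub]
  refine (congrArg (ExteriorAlgebra.ι K) ?_).trans (map_zero (ExteriorAlgebra.ι K))
  ext j
  simp

lemma phi_zero_kills {h : ExtXY K n}
    (hh : h ∈ TwoSidedIdeal.span (Set.range (yVar K n))) : phi 0 h = 0 := by
  rw [← TwoSidedIdeal.mem_ker]
  refine TwoSidedIdeal.span_le.2 ?_ hh
  rintro _ ⟨i, rfl⟩
  rw [SetLike.mem_coe, TwoSidedIdeal.mem_ker]
  simp [phi, yVar]

lemma xAct_mul (g h : Matrix.GeneralLinearGroup (Fin n) K) (q) :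
    xAct K n g (xAct K n h q) = xAct K n (h * g) q := by
  have : (xAct K n g).comp (xAct K n h) = xAct K n (h * g) := by
    simp only [xAct, ExteriorAlgebra.map_comp_map]
    rw [← Matrix.toLin'_mul, ← Matrix.transpose_mul]; rfl
  exact DFunLike.congr_fun this q

/-- The Hilbert ideal -/
noncomputable abbrev Hilb (G : Subgroup (Matrix.GeneralLinearGroup (Fin n) K)) :
    TwoSidedIdeal (ExteriorAlgebra K (Fin n → K)) :=
  TwoSidedIdeal.span
              {q : ExteriorAlgebra K (Fin n → K) |
                (∀ g : G, xAct K n g q = q) ∧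
                q ∈ (⨆ d ∈ Set.Ioi (0 : ℕ), ⋀[K]^d (Fin n → K) :
                      Submodule K (ExteriorAlgebra K (Fin n → K)))}

lemma main_mem [CharZero K] (G : Subgroup (Matrix.GeneralLinearGroup (Fin n) K)) [Fintype G]
    (h : ExtXY K n) :
    (∑ g : G, phi (Matrix.toLin'
      (((g : Matrix.GeneralLinearGroup (Fin n) K) : Matrix (Fin n) (Fin n) K).transpose)) h)
      - (Fintype.card G : K) • phi 0 h ∈ Hilb G := by
  have hs := mem_span h
  induction hs using Submodule.span_induction with
  | mem s hs =>
    obtain ⟨p, q, rfl⟩ := hs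
    simp only [map_mul, phi_x, phi_y, map_zero_eq]
    rw [← Finset.mul_sum, ← mul_smul_comm, ← mul_sub]
    refine TwoSidedIdeal.mul_mem_left _ _ _ (TwoSidedIdeal.subset_span ⟨?_, ?_⟩)
    · intro g
      simp only [map_sub, map_smul, AlgHom.commutes, map_sum]
      congr 1
      change ∑ x : G, xAct K n g (xAct K n x q) = ∑ x : G, xAct K n x q
      simp only [xAct_mul]
      exact Fintype.sum_equiv (Equiv.mulRight g) _ _ (fun x => rfl)
    · have := sub_mem_pos (∑ x : G, xAct K n x q)
      convert this using 2
      · rfl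
      have hx : ∀ x : G, ExteriorAlgebra.algebraMapInv (xAct K n x q)
          = ExteriorAlgebra.algebraMapInv q := fun x => inv_map _ q
      rw [map_sum, Finset.sum_congr rfl (fun x _ => hx x)]
      simp [Algebra.smul_def]
  | zero => simp [TwoSidedIdeal.zero_mem]
  | add a b _ _ ha hb =>
    have := TwoSidedIdeal.add_mem _ ha hb
    convert this using 1
    simp only [map_add, Finset.sum_add_distrib, smul_add]; abel
  | smul c a _ ha =>
    have := smul_mem' _ c ha
    convert this using 1
    simp only [map_smul, smul_sub, Finset.smul_sum]
    rw [smul_comm]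

end DerksenExt

/-- **Derksen's theorem in the exterior algebra.**
For a finite subgroup `G ≤ GL_n(K)`, with `J'_g ⊆ E = Λ(𝐱,𝐲)` the two-sided
ideal generated by the elements `y_i − Σ_j A(g)_{i,j} x_j`, with
`I_G = ⋂_g J'_g`, and `(𝐲)` the ideal generated by `y_1, …, y_n`, the
intersection `(I_G + (𝐲)) ∩ Λ(𝐱)` equals the Hilbert ideal `J_G ⊆ Λ(𝐱)`,
the ideal generated by all `G`-invariant elements of positive degree. -/
theorem derksen_exterior_hilbert_ideal
    (K : Type*) [Field K] [CharZero K] (n : ℕ) (hn : 0 < n)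
    (G : Subgroup (Matrix.GeneralLinearGroup (Fin n) K)) [Finite G] :
    {e : ExtXY K n |
        e ∈ (⨅ g : G, TwoSidedIdeal.span
              {e' : ExtXY K n | ∃ i : Fin n,
                e' = yVar K n i - ∑ j : Fin n,
                  (((g : Matrix.GeneralLinearGroup (Fin n) K) :
                      Matrix (Fin n) (Fin n) K) i j) • xVar K n j}) ⊔
            TwoSidedIdeal.span (Set.range (yVar K n)) ∧
        e ∈ Set.range (xEmbed K n)}
      = (xEmbed K n) ''
          {p : ExteriorAlgebra K (Fin n → K) |
            p ∈ TwoSidedIdeal.span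
              {q : ExteriorAlgebra K (Fin n → K) |
                (∀ g : G, xAct K n g q = q) ∧
                q ∈ (⨆ d ∈ Set.Ioi (0 : ℕ), ⋀[K]^d (Fin n → K) :
                      Submodule K (ExteriorAlgebra K (Fin n → K)))}} := by
  classical
  have := Fintype.ofFinite G
  ext e
  constructor
  · rintro ⟨he, p, rfl⟩
    refine ⟨p, ?_, rfl⟩
    have hle : (⨅ g : G, TwoSidedIdeal.span
              {e' : ExtXY K n | ∃ i : Fin n,
                e' = yVar K n i - ∑ j : Fin n,
                  (((g : Matrix.GeneralLinearGroup (Fin n) K) :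
                      Matrix (Fin n) (Fin n) K) i j) • xVar K n j}) ⊔
            TwoSidedIdeal.span (Set.range (yVar K n)) ≤
        TwoSidedIdeal.comap (DerksenExt.phi 0) (DerksenExt.Hilb G) := by
      refine sup_le ?_ ?_
      · intro h hh
        rw [TwoSidedIdeal.mem_comap]
        have h1 := DerksenExt.main_mem G h
        rw [Finset.sum_eq_zero, zero_sub] at h1
        · have h2 := DerksenExt.smul_mem' _ (-(Fintype.card G : K)⁻¹) h1
          have hc : (Fintype.card G : K) ≠ 0 := Nat.cast_ne_zero.2 Fintype.card_ne_zero
          rw [neg_smul_neg, smul_smul, inv_mul_cancel₀ hc, one_smul] at h2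
          exact h2
        · intro g _
          exact DerksenExt.phi_kills _ ((TwoSidedIdeal.mem_iInf _).1 hh g)
      · intro h hh
        rw [TwoSidedIdeal.mem_comap, DerksenExt.phi_zero_kills hh]
        exact TwoSidedIdeal.zero_mem _
    have := hle he
    rw [TwoSidedIdeal.mem_comap, DerksenExt.phi_x] at this
    exact this
  · rintro ⟨p, hp, rfl⟩
    refine ⟨?_, p, rfl⟩
    rw [← TwoSidedIdeal.mem_comap]
    refine TwoSidedIdeal.span_le.2 ?_ hp
    rintro q ⟨hq, hpos⟩
    rw [SetLike.mem_coe, TwoSidedIdeal.mem_comap]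
    have h1 : DerksenExt.yE K n q - (DerksenExt.yE K n q - xEmbed K n q) = xEmbed K n q := by
      abel
    rw [← h1]
    refine TwoSidedIdeal.sub_mem _ ?_ ?_
    · have hle := le_sup_right (a := ⨅ g : G, TwoSidedIdeal.span
              {e' : ExtXY K n | ∃ i : Fin n,
                e' = yVar K n i - ∑ j : Fin n,
                  (((g : Matrix.GeneralLinearGroup (Fin n) K) :
                      Matrix (Fin n) (Fin n) K) i j) • xVar K n j})
        (b := TwoSidedIdeal.span (Set.range (yVar K n)))
      exact TwoSidedIdeal.le_iff.1 hle (DerksenExt.yE_mem hpos)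
    · refine TwoSidedIdeal.le_iff.1 le_sup_left ((TwoSidedIdeal.mem_iInf _).2 fun g => ?_)
      have := DerksenExt.diff_mem (g : Matrix.GeneralLinearGroup (Fin n) K) q
      rwa [hq g] at this
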